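/- Let n ≥ 1 and let z₁, …, zₙ be complex numbers such that there is a unique index i₀ with Re(z_{i₀}) < Re(zᵢ) for all i ≠ i₀. Then the complex softmax functional softmax_α(z₁,…,zₙ) := (∑ᵢ zᵢ e^{α zᵢ}) / (∑ⱼ e^{α zⱼ}), with real parameter α and complex exponentials, converges to z_{i₀} as α → −∞ (in particular the denominator is nonzero for all sufficiently negative α). -/

import Mathlib

/-!
Among the weights `wᵢ = e^{α zᵢ}`, the one whose exponent has least real part dominates as
`α → -∞`: each of the others is little-o of it, so the sum of the weights is equivalent to it. In
`centerMass w v - v_{i₀} = (∑ wᵢ)⁻¹ • ∑ wᵢ • (vᵢ - v_{i₀})` the `i₀` term of the last sum vanishes,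
hence that sum is little-o of `∑ wᵢ`. The softmax is the case `v = z`.
-/

open Asymptotics Filter Topology

theorem centerMass_sub_const {ι K E : Type*} [Field K] [AddCommGroup E] [Module K E]
    {s : Finset ι} {w : ι → K} (hw : ∑ i ∈ s, w i ≠ 0) (v : ι → E) (a : E) :
    s.centerMass w (fun i ↦ v i - a) = s.centerMass w v - a := by
  simp only [Finset.centerMass, smul_sub, Finset.sum_sub_distrib, ← Finset.sum_smul,
    inv_smul_smul₀ hw]

section DominantWeight

variable {ι X : Type*} {l : Filter X} {s : Finset ι} {i₀ : ι}

theorem isEquivalent_sum_of_isLittleO {E : Type*} [NormedAddCommGroup E] {f : ι → X → E}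
    (hi₀ : i₀ ∈ s) (hf : ∀ i ∈ s, i ≠ i₀ → f i =o[l] f i₀) :
    (fun x ↦ ∑ i ∈ s, f i x) ~[l] f i₀ := by
  classical
  have hrest : (fun x ↦ ∑ i ∈ s.erase i₀, f i x) =o[l] f i₀ :=
    .fun_sum fun i hi ↦ hf i (Finset.mem_of_mem_erase hi) (Finset.ne_of_mem_erase hi)
  refine (IsEquivalent.refl.add_isLittleO hrest).congr_left (.of_forall fun x ↦ ?_)
  exact Finset.add_sum_erase s (f · x) hi₀

theorem eventually_sum_ne_zero_of_isLittleO {E : Type*} [NormedAddCommGroup E] {f : ι → X → E}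
    (hi₀ : i₀ ∈ s) (hf : ∀ i ∈ s, i ≠ i₀ → f i =o[l] f i₀) (hne : ∀ᶠ x in l, f i₀ x ≠ 0) :
    ∀ᶠ x in l, ∑ i ∈ s, f i x ≠ 0 := by
  filter_upwards [(isEquivalent_sum_of_isLittleO hi₀ hf).isBigO_symm.eq_zero_imp, hne]
    with x hzero hx using mt hzero hx

theorem tendsto_centerMass_of_isLittleO {𝕜 E : Type*} [NormedField 𝕜] [SeminormedAddCommGroup E]
    [NormedSpace 𝕜 E] {w : ι → X → 𝕜} (hi₀ : i₀ ∈ s) (hw : ∀ i ∈ s, i ≠ i₀ → w i =o[l] w i₀)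
    (hne : ∀ᶠ x in l, w i₀ x ≠ 0) (v : ι → E) :
    Tendsto (fun x ↦ s.centerMass (w · x) v) l (𝓝 (v i₀)) := by
  have hterm : ∀ i ∈ s, (fun x ↦ w i x • (v i - v i₀)) =o[l] w i₀ := by
    intro i hi
    obtain rfl | hi_ne := eq_or_ne i i₀
    · simp [isLittleO_zero]
    · have hbound : (fun x ↦ w i x • (v i - v i₀)) =O[l] w i :=
        isBigO_of_le' l fun x ↦ (norm_smul_le _ _).trans_eq (mul_comm _ _)
      exact hbound.trans_isLittleO (hw i hi hi_ne)
  have hsum : (fun x ↦ ∑ i ∈ s, w i x • (v i - v i₀)) =o[l] fun x ↦ ∑ i ∈ s, w i x :=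
    (IsLittleO.fun_sum hterm).trans_isBigO (isEquivalent_sum_of_isLittleO hi₀ hw).isBigO_symm
  refine tendsto_sub_nhds_zero_iff.mp (hsum.tendsto_inv_smul_nhds_zero.congr' ?_)
  filter_upwards [eventually_sum_ne_zero_of_isLittleO hi₀ hw hne] with x hx
  exact centerMass_sub_const hx v (v i₀)

end DominantWeight

theorem isLittleO_cexp_ofReal_mul_atBot_iff {z w : ℂ} :
    ((fun α : ℝ ↦ Complex.exp (α * z)) =o[atBot] fun α : ℝ ↦ Complex.exp (α * w)) ↔
      w.re < z.re := by
  rw [← isLittleO_norm_norm]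
  simp only [Complex.norm_exp, Complex.re_ofReal_mul, Real.isLittleO_exp_comp_exp_comp, ← mul_sub]
  exact (tendsto_mul_const_atTop_iff_neg tendsto_id).trans sub_neg

theorem complex_softmax_tendsto_argmin_re_general {ι E : Type*} [SeminormedAddCommGroup E]
    [NormedSpace ℂ E] {s : Finset ι} {i₀ : ι} (hi₀ : i₀ ∈ s) (z : ι → ℂ) (v : ι → E)
    (hmin : ∀ i ∈ s, i ≠ i₀ → (z i₀).re < (z i).re) :
    (∀ᶠ α : ℝ in atBot, ∑ i ∈ s, Complex.exp (α * z i) ≠ 0) ∧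
      Tendsto (fun α : ℝ ↦ s.centerMass (fun i ↦ Complex.exp (α * z i)) v) atBot (𝓝 (v i₀)) := by
  have hdom : ∀ i ∈ s, i ≠ i₀ →
      (fun α : ℝ ↦ Complex.exp (α * z i)) =o[atBot] fun α : ℝ ↦ Complex.exp (α * z i₀) :=
    fun i hi hne ↦ isLittleO_cexp_ofReal_mul_atBot_iff.mpr (hmin i hi hne)
  have hexp : ∀ᶠ α : ℝ in atBot, Complex.exp (α * z i₀) ≠ 0 :=
    .of_forall fun _ ↦ Complex.exp_ne_zero _
  exact ⟨eventually_sum_ne_zero_of_isLittleO hi₀ hdom hexp,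
    tendsto_centerMass_of_isLittleO hi₀ hdom hexp v⟩

/-- **Complex softmax at `α → −∞`.** For complex numbers `z₁, …, zₙ` (`n ≥ 1`) with a
unique index `i₀` of strictly minimal real part, the complex softmax
`softmax_α(z) = (∑ᵢ zᵢ e^{α zᵢ}) / (∑ⱼ e^{α zⱼ})` converges to `z_{i₀}` as `α → −∞`,
and in particular the denominator is nonzero for all sufficiently negative `α`. -/
theorem complex_softmax_tendsto_argmin_re (n : ℕ) (z : Fin (n + 1) → ℂ) (i₀ : Fin (n + 1))
    (hmin : ∀ i, i ≠ i₀ → (z i₀).re < (z i).re) :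
    (∀ᶠ α : ℝ in Filter.atBot, (∑ j, Complex.exp ((α : ℂ) * z j)) ≠ 0) ∧
    Filter.Tendsto
      (fun α : ℝ =>
        (∑ i, z i * Complex.exp ((α : ℂ) * z i)) / (∑ j, Complex.exp ((α : ℂ) * z j)))
      Filter.atBot (nhds (z i₀)) := by
  simpa only [Finset.centerMass, smul_eq_mul, inv_mul_eq_div, mul_comm (Complex.exp _)] using
    complex_softmax_tendsto_argmin_re_general (Finset.mem_univ i₀) z z fun i _ ↦ hmin i
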